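/- Let K be a nonempty finite index set, a : K → ℝ with a_k > 0 for every k, r > 0, and let f : K → B be a function into a finite index set B whose fibers f⁻¹(j) are all nonempty. The pushforward of the product measure ⊗_{k ∈ K} Gamma(a_k, r) on (K → ℝ) under the map g ↦ (j ↦ Σ_{k : f(k) = j} g(k)) equals the product measure ⊗_{j ∈ B} Gamma(Σ_{k : f(k) = j} a_k, r). (Aggregation of independent gamma masses over a partition of components, the finite-dimensional form of the decomposability of the gamma process.) -/

import Mathlib

open MeasureTheory ProbabilityTheory Classical

open scoped Classical

/-!
The density of `Gamma(a, r) ∗ Gamma(b, r)` at `x > 0` is a multiple of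
`exp (-r x) ∫₀ˣ y ^ (a - 1) (x - y) ^ (b - 1) dy`, because the exponential factors combine into one
that does not depend on `y`. The integral is a rescaled beta integral, so the convolution is
`Gamma(a + b, r)`, and by induction a nonempty sum of independent gamma variables of rate `r` is
again gamma. Over a whole partition, the coordinates split into independent blocks, one per fiber of
`f`, so the block sums are independent and each is the sum of the coordinates of one block.
-/

section Beta

variable {a b x : ℝ}

theorem integral_rpow_mul_sub_rpow (ha : 0 < a) (hb : 0 < b) (hx : 0 < x) :
    ∫ y in 0..x, y ^ (a - 1) * (x - y) ^ (b - 1) = x ^ (a + b - 1) * beta a b := by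
  have ofReal_integrand : ∀ y ∈ Set.uIcc 0 x,
      (y : ℂ) ^ ((a : ℂ) - 1) * ((x : ℂ) - y) ^ ((b : ℂ) - 1) =
        ((y ^ (a - 1) * (x - y) ^ (b - 1) : ℝ) : ℂ) := by
    intro y hy
    rw [Set.uIcc_of_le hx.le] at hy
    push_cast [Complex.ofReal_cpow hy.1, Complex.ofReal_cpow (sub_nonneg.2 hy.2)]
    rfl
  have ofReal_beta : Complex.betaIntegral a b = (beta a b : ℝ) := by
    rw [Complex.betaIntegral_eq_Gamma_mul_div _ _ (by simpa) (by simpa), beta]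
    push_cast [← Complex.Gamma_ofReal]
    rfl
  have scaled := Complex.betaIntegral_scaled a b hx
  rw [intervalIntegral.integral_congr ofReal_integrand, intervalIntegral.integral_ofReal,
    ofReal_beta] at scaled
  apply Complex.ofReal_injective
  rw [scaled]
  push_cast [Complex.ofReal_cpow hx.le]
  rfl

theorem setLIntegral_Icc_rpow_mul_sub_rpow (ha : 0 < a) (hb : 0 < b) (hx : 0 < x) :
    ∫⁻ y in Set.Icc 0 x, .ofReal (y ^ (a - 1) * (x - y) ^ (b - 1)) =
      .ofReal (x ^ (a + b - 1) * beta a b) := by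
  have integral_eq := integral_rpow_mul_sub_rpow ha hb hx
  have integral_pos : 0 < x ^ (a + b - 1) * beta a b := by
    have := beta_pos ha hb
    positivity
  have integrable : IntegrableOn (fun y ↦ y ^ (a - 1) * (x - y) ^ (b - 1)) (Set.Icc 0 x) :=
    (intervalIntegrable_iff_integrableOn_Icc_of_le hx.le).1 <|
      intervalIntegral.intervalIntegrable_of_integral_ne_zero (integral_eq ▸ integral_pos.ne')
  have nonneg : ∀ᵐ y ∂volume.restrict (Set.Icc 0 x), 0 ≤ y ^ (a - 1) * (x - y) ^ (b - 1) :=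
    ae_restrict_of_forall_mem measurableSet_Icc fun y hy ↦
      mul_nonneg (Real.rpow_nonneg hy.1 _) (Real.rpow_nonneg (sub_nonneg.2 hy.2) _)
  rw [← ofReal_integral_eq_lintegral_ofReal integrable nonneg, integral_Icc_eq_integral_Ioc,
    ← intervalIntegral.integral_of_le hx.le, integral_eq]

end Beta

section GammaConvolution

variable {a b r x y : ℝ}

theorem gammaPDFReal_mul_gammaPDFReal_sub (hr : 0 < r) (hy : y ∈ Set.Icc 0 x) :
    gammaPDFReal a r y * gammaPDFReal b r (x - y) =
      r ^ (a + b) / (Real.Gamma a * Real.Gamma b) * Real.exp (-(r * x)) *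
        (y ^ (a - 1) * (x - y) ^ (b - 1)) := by
  have exp_split : Real.exp (-(r * x)) = Real.exp (-(r * y)) * Real.exp (-(r * (x - y))) := by
    rw [← Real.exp_add]
    ring_nf
  rw [gammaPDFReal, gammaPDFReal, if_pos hy.1, if_pos (sub_nonneg.2 hy.2), exp_split,
    Real.rpow_add hr]
  ring

theorem gammaPDF_mul_gammaPDF_sub_of_notMem (hy : y ∉ Set.Icc 0 x) :
    gammaPDF a r y * gammaPDF b r (x - y) = 0 := by
  rcases lt_or_ge y 0 with hy₀ | hy₀
  · rw [gammaPDF_of_neg hy₀, zero_mul]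
  · have hyx : x < y := lt_of_not_ge fun hyx ↦ hy ⟨hy₀, hyx⟩
    rw [gammaPDF_of_neg (sub_neg.2 hyx), mul_zero]

-- At `x = 0` the left-hand side is `0`, but if `a + b = 1` the right-hand side is `r`: `0 ^ 0 = 1`.
theorem lconvolution_gammaPDF (ha : 0 < a) (hb : 0 < b) (hr : 0 < r) (hx : x ≠ 0) :
    (gammaPDF a r ⋆ₗ gammaPDF b r) x = gammaPDF (a + b) r x := by
  have restrict_Icc : (gammaPDF a r ⋆ₗ gammaPDF b r) x =
      ∫⁻ y in Set.Icc 0 x, gammaPDF a r y * gammaPDF b r (x - y) := by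
    simp only [lconvolution_def, neg_add_eq_sub]
    exact (setLIntegral_eq_of_support_subset <| Function.support_subset_iff'.2
      fun y ↦ gammaPDF_mul_gammaPDF_sub_of_notMem).symm
  rcases hx.lt_or_gt with hx | hx
  · rw [restrict_Icc, Set.Icc_eq_empty hx.not_ge, setLIntegral_empty, gammaPDF_of_neg hx]
  set c := r ^ (a + b) / (Real.Gamma a * Real.Gamma b) * Real.exp (-(r * x)) with hc
  have c_nonneg : 0 ≤ c := by positivity
  calc (gammaPDF a r ⋆ₗ gammaPDF b r) x
      = ∫⁻ y in Set.Icc 0 x, .ofReal c * .ofReal (y ^ (a - 1) * (x - y) ^ (b - 1)) := by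
        rw [restrict_Icc]
        refine setLIntegral_congr_fun measurableSet_Icc fun y hy ↦ ?_
        rw [gammaPDF, gammaPDF, ← ENNReal.ofReal_mul (gammaPDFReal_nonneg ha hr y),
          gammaPDFReal_mul_gammaPDFReal_sub hr hy, ENNReal.ofReal_mul c_nonneg]
    _ = .ofReal (c * (x ^ (a + b - 1) * beta a b)) := by
        rw [lintegral_const_mul' _ _ ENNReal.ofReal_ne_top,
          setLIntegral_Icc_rpow_mul_sub_rpow ha hb hx, ENNReal.ofReal_mul c_nonneg]
    _ = gammaPDF (a + b) r x := by
        rw [gammaPDF_of_nonneg hx.le, hc, beta]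
        congr 1
        field_simp

theorem gammaMeasure_conv_gammaMeasure (ha : 0 < a) (hb : 0 < b) (hr : 0 < r) :
    gammaMeasure a r ∗ gammaMeasure b r = gammaMeasure (a + b) r := by
  have measurable_gammaPDF (c : ℝ) : Measurable (gammaPDF c r) :=
    (measurable_gammaPDFReal c r).ennreal_ofReal
  rw [gammaMeasure, gammaMeasure,
    conv_withDensity_eq_lconvolution (measurable_gammaPDF a) (measurable_gammaPDF b)]
  refine withDensity_congr_ae ?_
  filter_upwards [Measure.ae_ne volume 0] with x hx
  exact lconvolution_gammaPDF ha hb hr hx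

end GammaConvolution

section GammaSum

variable {ι Ω : Type*} {mΩ : MeasurableSpace Ω} {P : Measure Ω} {X : ι → Ω → ℝ} {a : ι → ℝ} {r : ℝ}

theorem hasLaw_finsetSum_gammaMeasure (hindep : iIndepFun X P)
    (hlaw : ∀ i, HasLaw (X i) (gammaMeasure (a i) r) P) (ha : ∀ i, 0 < a i) (hr : 0 < r)
    {s : Finset ι} (hs : s.Nonempty) :
    HasLaw (∑ i ∈ s, X i) (gammaMeasure (∑ i ∈ s, a i) r) P := by
  induction hs using Finset.Nonempty.cons_induction with
  | singleton i => simpa only [Finset.sum_singleton] using hlaw i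
  | cons i s hi hs ih =>
    have sum_pos : 0 < ∑ j ∈ s, a j := Finset.sum_pos (fun j _ ↦ ha j) hs
    have := isProbabilityMeasure_gammaMeasure (ha i) hr
    have := isProbabilityMeasure_gammaMeasure sum_pos hr
    have indep_sum : IndepFun (X i) (∑ j ∈ s, X j) P :=
      (hindep.indepFun_finsetSum_of_notMem₀ (fun j ↦ (hlaw j).aemeasurable) hi).symm
    rw [Finset.sum_cons, Finset.sum_cons, ← gammaMeasure_conv_gammaMeasure (ha i) sum_pos hr]
    exact indep_sum.hasLaw_add (hlaw i) ih

theorem map_sum_pi_gammaMeasure [Fintype ι] [Nonempty ι] (ha : ∀ i, 0 < a i) (hr : 0 < r) :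
    (Measure.pi fun i ↦ gammaMeasure (a i) r).map (fun x ↦ ∑ i, x i) =
      gammaMeasure (∑ i, a i) r := by
  have (i : ι) : IsProbabilityMeasure (gammaMeasure (a i) r) :=
    isProbabilityMeasure_gammaMeasure (ha i) hr
  have sum_law := hasLaw_finsetSum_gammaMeasure
    (iIndepFun_pi (X := fun _ ↦ id) fun _ ↦ aemeasurable_id)
    (fun i ↦ (measurePreserving_eval (fun i ↦ gammaMeasure (a i) r) i).hasLaw)
    ha hr Finset.univ_nonempty
  simpa only [Finset.sum_fn, id] using sum_law.map_eq

end GammaSum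

section Fibers

variable {K B : Type*} [Fintype K] [Fintype B] (f : K → B)

theorem map_pi_pi_fiber {E : K → Type*} [∀ k, MeasurableSpace (E k)]
    (μ : ∀ k, Measure (E k)) [∀ k, SigmaFinite (μ k)] :
    (Measure.pi fun j ↦ Measure.pi fun k : {k // f k = j} ↦ μ k).map (fun h k ↦ h (f k) ⟨k, rfl⟩) =
      Measure.pi μ := by
  refine (Measure.pi_eq fun s hs ↦ ?_).symm
  have preimage_box :
      (fun (h : ∀ j, ∀ k : {k // f k = j}, E k) k ↦ h (f k) ⟨k, rfl⟩) ⁻¹' Set.univ.pi s =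
        Set.univ.pi fun j ↦ Set.univ.pi fun k : {k // f k = j} ↦ s k := by
    ext h
    simp only [Set.mem_preimage, Set.mem_univ_pi, Subtype.forall]
    exact ⟨by rintro hh _ k rfl; exact hh k, fun hh k ↦ hh _ k rfl⟩
  rw [Measure.map_apply (by fun_prop) (.univ_pi hs), preimage_box, Measure.pi_pi]
  simp only [Measure.pi_pi]
  exact Fintype.prod_fiberwise f fun k ↦ μ k (s k)

theorem map_fiberSum_pi {M : Type*} [AddCommMonoid M] [MeasurableSpace M] [MeasurableAdd₂ M]
    (μ : K → Measure M) [∀ k, IsFiniteMeasure (μ k)] :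
    (Measure.pi μ).map (fun g j ↦ ∑ k with f k = j, g k) =
      Measure.pi fun j ↦
        (Measure.pi fun k : {k // f k = j} ↦ μ k).map (fun x ↦ ∑ k, x k) := by
  have measurable_sum (j : B) : Measurable fun x : {k // f k = j} → M ↦ ∑ k, x k := by fun_prop
  rw [← map_pi_pi_fiber f, Measure.map_map (by fun_prop) (by fun_prop),
    ← Measure.pi_map_pi fun j ↦ (measurable_sum j).aemeasurable]
  congr 1
  funext h j
  rw [Function.comp_apply, Finset.sum_subtype (p := fun k ↦ f k = j) _ (by simp)]
  exact Finset.sum_congr rfl (by rintro ⟨k, rfl⟩ _; rfl)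

end Fibers

theorem gamma_aggregation {K B : Type*} [Fintype K] [Nonempty K] [Fintype B]
    (a : K → ℝ) (ha : ∀ k, 0 < a k) (r : ℝ) (hr : 0 < r)
    (f : K → B) (hf : ∀ j : B, ∃ k : K, f k = j) :
    Measure.map (fun g : K → ℝ => fun j : B => ∑ k ∈ Finset.univ.filter (fun k => f k = j), g k)
      (Measure.pi (fun k : K => gammaMeasure (a k) r))
      = Measure.pi (fun j : B =>
          gammaMeasure (∑ k ∈ Finset.univ.filter (fun k => f k = j), a k) r) := by
  have (k : K) : IsProbabilityMeasure (gammaMeasure (a k) r) :=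
    isProbabilityMeasure_gammaMeasure (ha k) hr
  rw [map_fiberSum_pi f]
  congr 1 with j : 1
  have : Nonempty {k // f k = j} := nonempty_subtype.2 (hf j)
  rw [map_sum_pi_gammaMeasure (fun k : {k // f k = j} ↦ ha k) hr,
    Finset.sum_subtype (p := fun k ↦ f k = j) _ (by simp)]
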